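/- Boundedness of the supply duals in Stage One: for every iteration t and every impression i with Γ(i) ≠ ∅, β^t_i ≤ max_{j∈Γ(i)}(p_j + V_j), and β^t_i = 0 when Γ(i) = ∅; consequently, for every i the nondecreasing sequence (β^t_i)_{t≥0} converges as t → ∞. -/

import Mathlib

open Finset Filter Topology

noncomputable section

variable {I J : Type*} [Fintype I] [Fintype J]

open Classical in
/-- Γ(j): the impressions eligible for contract `j`. -/
def GammaD (adj : I → J → Prop) (j : J) : Finset I :=
  Finset.univ.filter (fun i => adj i j)

open Classical in
/-- Γ(i): the contracts eligible for impression `i`. -/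
def GammaS (adj : I → J → Prop) (i : I) : Finset J :=
  Finset.univ.filter (fun j => adj i j)

/-- Total eligible supply `S_j = ∑_{i ∈ Γ(j)} s_i`. -/
def Stot (adj : I → J → Prop) (s : I → ℝ) (j : J) : ℝ :=
  ∑ i ∈ GammaD adj j, s i

/-- Target `θ_{ij} = d_j / S_j` (independent of `i`). -/
def theta (adj : I → J → Prop) (s : I → ℝ) (d : J → ℝ) (j : J) : ℝ :=
  d j / Stot adj s j

/-- `g_{ij}(z) = max {0, θ_{ij} (1 + z / V_j)}` (independent of `i`). -/
def gfun (adj : I → J → Prop) (s : I → ℝ) (d V : J → ℝ) (j : J) (z : ℝ) : ℝ :=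
  max 0 ((theta adj s d j) * (1 + z / V j))

/-- `b` is a valid supply dual `β_i` for demand duals `α`: `b ≥ 0` and either `b = 0` with
`∑_{j ∈ Γ(i)} g_{ij}(α_j) ≤ 1`, or `∑_{j ∈ Γ(i)} g_{ij}(α_j − b) = 1`. -/
def BetaSpec (adj : I → J → Prop) (s : I → ℝ) (d V : J → ℝ)
    (α : J → ℝ) (i : I) (b : ℝ) : Prop :=
  0 ≤ b ∧ ((b = 0 ∧ ∑ j ∈ GammaS adj i, gfun adj s d V j (α j) ≤ 1) ∨
    ∑ j ∈ GammaS adj i, gfun adj s d V j (α j - b) = 1)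

/-- Stage One of SHALE: `α⁰ = 0`; `β^t_i` is a valid supply dual for `α^t`; and
`α^{t+1}_j = min (p_j) a_j` where `a_j` solves `∑_{i ∈ Γ(j)} s_i g_{ij}(a_j − β^t_i) = d_j`. -/
def StageOne (adj : I → J → Prop) (s : I → ℝ) (d p V : J → ℝ)
    (α : ℕ → J → ℝ) (β : ℕ → I → ℝ) : Prop :=
  (∀ j, α 0 j = 0) ∧
  (∀ t i, BetaSpec adj s d V (α t) i (β t i)) ∧
  (∀ t j, ∃ a : ℝ,
    (∑ i ∈ GammaD adj j, s i * gfun adj s d V j (a - β t i) = d j) ∧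
    α (t + 1) j = min (p j) a)

/-- Projected delivery `d_j(α) = ∑_{i ∈ Γ(j)} s_i g_{ij}(α_j − β_i)`. -/
def Dproj (adj : I → J → Prop) (s : I → ℝ) (d V : J → ℝ)
    (α : J → ℝ) (β : I → ℝ) (j : J) : ℝ :=
  ∑ i ∈ GammaD adj j, s i * gfun adj s d V j (α j - β i)

/-- The objective of the allocation problem. -/
def Fobj (adj : I → J → Prop) (s : I → ℝ) (d p V : J → ℝ)
    (x : I → J → ℝ) (u : J → ℝ) : ℝ :=
  (1 / 2) * ∑ j, ∑ i ∈ GammaD adj j,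
      s i * (V j / theta adj s d j) * (x i j - theta adj s d j) ^ 2
    + ∑ j, p j * u j

/-- Feasibility for the allocation problem. -/
def Feasible (adj : I → J → Prop) (s : I → ℝ) (d : J → ℝ)
    (x : I → J → ℝ) (u : J → ℝ) : Prop :=
  (∀ j, d j ≤ ∑ i ∈ GammaD adj j, s i * x i j + u j) ∧
  (∀ i, ∑ j ∈ GammaS adj i, x i j ≤ 1) ∧
  (∀ i j, adj i j → 0 ≤ x i j) ∧
  (∀ j, 0 ≤ u j)

/-- The KKT conditions for duals `(α, β)`. -/
def KKT (adj : I → J → Prop) (s : I → ℝ) (d p V : J → ℝ)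
    (α : J → ℝ) (β : I → ℝ) : Prop :=
  (∀ j, 0 ≤ α j ∧ α j ≤ p j) ∧
  (∀ i, 0 ≤ β i ∧ (∑ j ∈ GammaS adj i, gfun adj s d V j (α j - β i) ≤ 1) ∧
    (0 < β i → ∑ j ∈ GammaS adj i, gfun adj s d V j (α j - β i) = 1)) ∧
  (∀ j, (∑ i ∈ GammaD adj j, s i * gfun adj s d V j (α j - β i) ≤ d j) ∧
    (α j < p j → ∑ i ∈ GammaD adj j, s i * gfun adj s d V j (α j - β i) = d j))


section helpers

theorem theta_pos_aux {adj : I → J → Prop} {s : I → ℝ} {d : J → ℝ}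
    (hd : ∀ j, 0 < d j) (hS : ∀ j, 0 < Stot adj s j) (j : J) : 0 < theta adj s d j :=
  div_pos (hd j) (hS j)

theorem gfun_nonneg_aux (adj : I → J → Prop) (s : I → ℝ) (d V : J → ℝ) (j : J) (z : ℝ) :
    0 ≤ gfun adj s d V j z := le_max_left _ _

theorem gfun_lin_lt {adj : I → J → Prop} {s : I → ℝ} {d V : J → ℝ}
    (hd : ∀ j, 0 < d j) (hV : ∀ j, 0 < V j) (hS : ∀ j, 0 < Stot adj s j) (j : J) {x y : ℝ}
    (h : x < y) : theta adj s d j * (1 + x / V j) < theta adj s d j * (1 + y / V j) := by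
  have h1 := theta_pos_aux hd hS j
  have h2 : x / V j < y / V j := div_lt_div_of_pos_right h (hV j)
  exact mul_lt_mul_of_pos_left (by linarith) h1

theorem gfun_mono_aux {adj : I → J → Prop} {s : I → ℝ} {d V : J → ℝ}
    (hd : ∀ j, 0 < d j) (hV : ∀ j, 0 < V j) (hS : ∀ j, 0 < Stot adj s j) (j : J) {x y : ℝ}
    (h : x ≤ y) : gfun adj s d V j x ≤ gfun adj s d V j y := by
  rcases h.eq_or_lt with rfl | h
  · exact le_rfl
  · exact max_le_max le_rfl (gfun_lin_lt hd hV hS j h).le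

theorem gfun_strict_aux {adj : I → J → Prop} {s : I → ℝ} {d V : J → ℝ}
    (hd : ∀ j, 0 < d j) (hV : ∀ j, 0 < V j) (hS : ∀ j, 0 < Stot adj s j) (j : J) {x y : ℝ}
    (h : x < y) (hx : gfun adj s d V j x ≠ 0) : gfun adj s d V j x < gfun adj s d V j y := by
  have h1 := gfun_lin_lt hd hV hS j h
  unfold gfun at *
  rcases le_total (theta adj s d j * (1 + x / V j)) 0 with h2 | h2
  · exact absurd (max_eq_left h2) hx
  · rw [max_eq_right h2]
    exact lt_max_of_lt_right h1

theorem alpha_le_aux {adj : I → J → Prop} {s : I → ℝ} {d p V : J → ℝ}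
    (hp : ∀ j, 0 < p j) {α : ℕ → J → ℝ} {β : ℕ → I → ℝ}
    (hstage : StageOne adj s d p V α β) (t : ℕ) (j : J) : α t j ≤ p j := by
  obtain ⟨h0, -, h2⟩ := hstage
  cases t with
  | zero => rw [h0]; exact (hp j).le
  | succ t =>
    obtain ⟨a, -, h⟩ := h2 t j
    rw [h]; exact min_le_left _ _

theorem beta_mono_aux {adj : I → J → Prop} {s : I → ℝ} {d V : J → ℝ}
    (hd : ∀ j, 0 < d j) (hV : ∀ j, 0 < V j) (hS : ∀ j, 0 < Stot adj s j)
    {x y : J → ℝ} (hxy : ∀ j, x j ≤ y j) {i : I} {b c : ℝ}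
    (hb : BetaSpec adj s d V x i b) (hc : BetaSpec adj s d V y i c) : b ≤ c := by
  by_contra hlt
  push Not at hlt
  obtain ⟨hc0, hc⟩ := hc
  obtain ⟨hb0, ⟨hb, -⟩ | hb⟩ := hb
  · linarith
  have hc1 : ∑ j ∈ GammaS adj i, gfun adj s d V j (y j - c) ≤ 1 := by
    rcases hc with ⟨rfl, h⟩ | h
    · simpa using h
    · exact h.le
  obtain ⟨j, hj, hne⟩ := Finset.exists_ne_zero_of_sum_ne_zero (by rw [hb]; exact one_ne_zero)
  have : ∑ j ∈ GammaS adj i, gfun adj s d V j (x j - b)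
      < ∑ j ∈ GammaS adj i, gfun adj s d V j (y j - c) := by
    apply Finset.sum_lt_sum
    · intro k _
      exact gfun_mono_aux hd hV hS k (by linarith [hxy k])
    · exact ⟨j, hj, gfun_strict_aux hd hV hS j (by linarith [hxy j]) hne⟩
  linarith

theorem a_mono_aux {adj : I → J → Prop} {s : I → ℝ} {d V : J → ℝ}
    (hs : ∀ i, 0 < s i)
    (hd : ∀ j, 0 < d j) (hV : ∀ j, 0 < V j) (hS : ∀ j, 0 < Stot adj s j)
    {x y : I → ℝ} (hxy : ∀ i, x i ≤ y i) {j : J} {a b : ℝ}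
    (ha : ∑ i ∈ GammaD adj j, s i * gfun adj s d V j (a - x i) = d j)
    (hb : ∑ i ∈ GammaD adj j, s i * gfun adj s d V j (b - y i) = d j) : a ≤ b := by
  by_contra hlt
  push Not at hlt
  obtain ⟨i, hi, hne⟩ := Finset.exists_ne_zero_of_sum_ne_zero (by rw [hb]; exact (hd j).ne')
  have : ∑ i ∈ GammaD adj j, s i * gfun adj s d V j (b - y i)
      < ∑ i ∈ GammaD adj j, s i * gfun adj s d V j (a - x i) := by
    apply Finset.sum_lt_sum
    · intro k _
      exact mul_le_mul_of_nonneg_left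
        (gfun_mono_aux hd hV hS j (by linarith [hxy k])) (hs k).le
    · exact ⟨i, hi, mul_lt_mul_of_pos_left (gfun_strict_aux hd hV hS j (by linarith [hxy i])
        (right_ne_zero_of_mul hne)) (hs i)⟩
  linarith

theorem alpha_mono_aux {adj : I → J → Prop} {s : I → ℝ} {d p V : J → ℝ}
    (hs : ∀ i, 0 < s i) (hd : ∀ j, 0 < d j) (hp : ∀ j, 0 < p j) (hV : ∀ j, 0 < V j)
    (hS : ∀ j, 0 < Stot adj s j) {α : ℕ → J → ℝ} {β : ℕ → I → ℝ}
    (hstage : StageOne adj s d p V α β) (t : ℕ) : ∀ j, α t j ≤ α (t + 1) j := by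
  obtain ⟨h0, h1, h2⟩ := hstage
  induction t with
  | zero =>
    intro j
    obtain ⟨a, ha, h⟩ := h2 0 j
    rw [h, h0]
    refine le_min (hp j).le ?_
    refine a_mono_aux (x := fun _ => 0) hs hd hV hS (fun i => (h1 0 i).1) ?_ ha
    have hg : gfun adj s d V j (0 - 0) = theta adj s d j := by
      simp [gfun, (theta_pos_aux hd hS j).le]
    simp only [hg]
    rw [← Finset.sum_mul]
    exact mul_div_cancel₀ (d j) (hS j).ne'
  | succ t ih =>
    intro j
    obtain ⟨a, ha, h⟩ := h2 t j
    obtain ⟨b, hb, h'⟩ := h2 (t + 1) j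
    rw [h, h']
    exact min_le_min le_rfl (a_mono_aux hs hd hV hS
      (fun i => beta_mono_aux hd hV hS ih (h1 t i) (h1 (t + 1) i)) ha hb)

end helpers

theorem shale_beta_bounded_converges
    (adj : I → J → Prop) (s : I → ℝ) (d p V : J → ℝ)
    (hs : ∀ i, 0 < s i) (hd : ∀ j, 0 < d j) (hp : ∀ j, 0 < p j) (hV : ∀ j, 0 < V j)
    (hS : ∀ j, 0 < Stot adj s j)
    (α : ℕ → J → ℝ) (β : ℕ → I → ℝ) (hstage : StageOne adj s d p V α β) :
    (∀ t i, ∀ h : (GammaS adj i).Nonempty,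
      β t i ≤ (GammaS adj i).sup' h (fun j => p j + V j)) ∧
    (∀ t i, GammaS adj i = ∅ → β t i = 0) ∧
    (∀ i, ∃ L : ℝ, Filter.Tendsto (fun t => β t i) Filter.atTop (𝓝 L)) := by
  have hbd : ∀ t i, ∀ h : (GammaS adj i).Nonempty,
      β t i ≤ (GammaS adj i).sup' h (fun j => p j + V j) := by
    intro t i h
    obtain ⟨hb0, ⟨hb, -⟩ | hb⟩ := hstage.2.1 t i
    · obtain ⟨j, hj⟩ := h
      exact le_trans (by linarith [hp j, hV j])
        (Finset.le_sup' (fun j => p j + V j) hj)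
    · obtain ⟨j, hj, hne⟩ :=
        Finset.exists_ne_zero_of_sum_ne_zero (by rw [hb]; exact one_ne_zero)
      refine le_trans ?_ (Finset.le_sup' (fun j => p j + V j) hj)
      by_contra hlt
      push Not at hlt
      apply hne
      have h1 := alpha_le_aux hp hstage t j
      have h2 : (α t j - β t i) / V j ≤ -1 := by
        rw [div_le_iff₀ (hV j)]
        linarith
      exact max_eq_left (mul_nonpos_of_nonneg_of_nonpos (theta_pos_aux hd hS j).le
        (by linarith))
  have hem : ∀ t i, GammaS adj i = ∅ → β t i = 0 := by
    intro t i h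
    obtain ⟨hb0, ⟨hb, -⟩ | hb⟩ := hstage.2.1 t i
    · exact hb
    · simp [h] at hb
  refine ⟨hbd, hem, fun i => ?_⟩
  have hmono : Monotone (fun t => β t i) := monotone_nat_of_le_succ fun t =>
    beta_mono_aux hd hV hS (alpha_mono_aux hs hd hp hV hS hstage t)
      (hstage.2.1 t i) (hstage.2.1 (t + 1) i)
  refine ⟨_, tendsto_atTop_ciSup hmono ?_⟩
  rcases (GammaS adj i).eq_empty_or_nonempty with h | h
  · exact ⟨0, by rintro _ ⟨t, rfl⟩; exact (hem t i h).le⟩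
  · exact ⟨_, by rintro _ ⟨t, rfl⟩; exact hbd t i h⟩

end
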